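/- arXiv:2409.02524 — 6 statements merged into one kernel-verified Lean document; each statement's English description precedes it below -/
import Mathlib

section
/- Let α > 0 and let B ∈ ℝ^{n×n} be entrywise nonnegative, and suppose μ̂ ∈ ℝ^n satisfies μ̂ ≥ 𝟏 entrywise and (I − αB)μ̂ = 𝟏. Then I − αB is invertible and (I − αB)^{-1}𝟏 = μ̂, i.e., the network with adjacency matrix B has Katz centrality vector exactly μ̂. -/
/-!
The vector `μhat` is a strictly positive weight for which `α • B` contracts: the equation says
`∑ j, α B i j * μhat j = μhat i - 1 < μhat i`. If `v` lies in the kernel of `1 - α • B`, let `c`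
be the maximum of `|v j| / μhat j`, attained at `i`. Then
`c * μhat i = |v i| ≤ ∑ j, α B i j * |v j| ≤ c * (μhat i - 1)`, so `c ≤ 0` and `v = 0`.
Hence the determinant is nonzero, and the formula for the inverse follows from the equation.
-/

open Matrix

theorem katz_of_solution {n : ℕ} (B : Matrix (Fin n) (Fin n) ℝ) (α : ℝ)
    (μhat : Fin n → ℝ)
    (hα : 0 < α) (hB : ∀ i j, 0 ≤ B i j) (hμ : ∀ i, 1 ≤ μhat i)
    (heq : (1 - α • B).mulVec μhat = (fun _ => 1)) :
    IsUnit (1 - α • B).det ∧ (1 - α • B)⁻¹.mulVec (fun _ => 1) = μhat := by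
  have hpos : ∀ i, 0 < μhat i := fun i => lt_of_lt_of_le one_pos (hμ i)
  have hrow : ∀ (v : Fin n → ℝ) i,
      ((1 - α • B) *ᵥ v) i = v i - ∑ j, α * B i j * v j := by
    intro v i
    rw [Matrix.sub_mulVec, Matrix.one_mulVec]
    simp [Matrix.mulVec, dotProduct]
  have hdet : IsUnit (1 - α • B).det := by
    rw [isUnit_iff_ne_zero]
    intro h0
    obtain ⟨v, hv, hker⟩ := Matrix.exists_mulVec_eq_zero_iff.mpr h0
    obtain ⟨k, hk⟩ := Function.ne_iff.mp hv
    haveI : Nonempty (Fin n) := ⟨k⟩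
    obtain ⟨i, hi⟩ := Finite.exists_max (fun j => |v j| / μhat j)
    set c := |v i| / μhat i with hc
    have hle : ∀ j, |v j| ≤ c * μhat j := fun j => (div_le_iff₀ (hpos j)).mp (hi j)
    have hvi : |v i| = c * μhat i := (div_mul_cancel₀ _ (hpos i).ne').symm
    have hcpos : 0 < c :=
      lt_of_lt_of_le (div_pos (abs_pos.mpr hk) (hpos k)) (hi k)
    have h1 : v i = ∑ j, α * B i j * v j := by
      have := hrow v i
      rw [hker, Pi.zero_apply] at this
      linarith
    have h2 : ∑ j, α * B i j * μhat j = μhat i - 1 := by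
      have := hrow μhat i
      rw [heq] at this
      linarith
    have h3 : |v i| ≤ c * (μhat i - 1) := by
      calc |v i| = |∑ j, α * B i j * v j| := congrArg _ h1
        _ ≤ ∑ j, |α * B i j * v j| := Finset.abs_sum_le_sum_abs _ _
        _ ≤ ∑ j, c * (α * B i j * μhat j) := by
          refine Finset.sum_le_sum fun j _ => ?_
          have hw : 0 ≤ α * B i j := mul_nonneg hα.le (hB i j)
          rw [abs_mul, abs_of_nonneg hw]
          calc α * B i j * |v j| ≤ α * B i j * (c * μhat j) :=
                mul_le_mul_of_nonneg_left (hle j) hw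
            _ = c * (α * B i j * μhat j) := by ring
        _ = c * (μhat i - 1) := by rw [← Finset.mul_sum, h2]
    linarith
  refine ⟨hdet, ?_⟩
  rw [← heq, Matrix.mulVec_mulVec, Matrix.nonsing_inv_mul _ hdet, Matrix.one_mulVec]
end

section
/- Let n ≥ 2, let A ∈ ℝ^{n×n} be entrywise nonnegative and irreducible, let D = diag(A𝟏), let α ∈ (0,1), let v ∈ ℝ^n with v ≥ 0 entrywise and v^T𝟏 = 1, and let π̂ ∈ ℝ^n with π̂ > 0 entrywise and π̂^T𝟏 = 1. Then there exists a matrix Δ ∈ S(A + I) such that: (i) Δ𝟏 = 0; (ii) all off-diagonal entries of A + Δ are nonnegative; and (iii) G̃^T π̂ = π̂, where G̃ = αD^{-1}(A+Δ) + (1−α)𝟏v^T. -/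
/-!
Put `d = A𝟏`, `w i = πhat i / d i` and `Y = diag(w) (A + Δ)`. The conditions on `Δ` say that `Y` has row
sums `πhat`, column sums `(πhat - (1 - α) v) / α`, and off-diagonal entries that are nonnegative and
supported on the graph of `A`; its diagonal is free. Only the difference `b` of row and column sums
matters for the off-diagonal part, so the claim is that some nonnegative flow on the graph of `A` has
divergence `b`, where `b` sums to zero.

The divergences of such flows form a convex cone. It contains `e i - e j` for every edge `i → j`,
hence, along walks, for all pairs `i, j` by irreducibility (`isFlowDiv_of_pow`). Since
`b = ∑ i, b i • (e i - e r)` for any fixed `r`, and the sign of `b i` only decides between `e i - e r`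
and `e r - e i`, the cone contains every `b` with zero sum (`isFlowDiv_of_sum_eq_zero`).
-/

open Matrix

/-- `b` is the divergence (outflow minus inflow) of a nonnegative flow `F` carried by the nonzero
entries of `A`. Loops are allowed, since they cancel in the divergence. -/
def IsFlowDiv {n : ℕ} (A : Matrix (Fin n) (Fin n) ℝ) (b : Fin n → ℝ) : Prop :=
  ∃ F : Matrix (Fin n) (Fin n) ℝ, (∀ i j, 0 ≤ F i j) ∧ (∀ i j, F i j ≠ 0 → A i j ≠ 0) ∧
    ∀ i, ∑ j, F i j - ∑ j, F j i = b i

namespace IsFlowDiv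

variable {n : ℕ} {A : Matrix (Fin n) (Fin n) ℝ}

lemma zero : IsFlowDiv A 0 := ⟨0, by simp, by simp, by simp⟩

lemma add {b c : Fin n → ℝ} (hb : IsFlowDiv A b) (hc : IsFlowDiv A c) : IsFlowDiv A (b + c) := by
  obtain ⟨F, hF0, hFA, hF⟩ := hb
  obtain ⟨G, hG0, hGA, hG⟩ := hc
  refine ⟨F + G, fun i j => add_nonneg (hF0 i j) (hG0 i j), fun i j h hA => h ?_, fun i => ?_⟩
  · have h1 : F i j = 0 := by_contra fun h' => hFA i j h' hA
    have h2 : G i j = 0 := by_contra fun h' => hGA i j h' hA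
    simp [h1, h2]
  · simp only [Matrix.add_apply, Finset.sum_add_distrib, Pi.add_apply, ← hF, ← hG]
    ring

lemma smul {b : Fin n → ℝ} (hb : IsFlowDiv A b) {t : ℝ} (ht : 0 ≤ t) : IsFlowDiv A (t • b) := by
  obtain ⟨F, hF0, hFA, hF⟩ := hb
  refine ⟨t • F, fun i j => mul_nonneg ht (hF0 i j), fun i j h => hFA i j ?_, fun i => ?_⟩
  · exact fun h' => h (by simp [h'])
  · simp only [Matrix.smul_apply, smul_eq_mul, ← Finset.mul_sum, Pi.smul_apply, ← hF]
    ring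

lemma sum {ι : Type*} (s : Finset ι) (b : ι → Fin n → ℝ) (h : ∀ i ∈ s, IsFlowDiv A (b i)) :
    IsFlowDiv A (∑ i ∈ s, b i) :=
  Finset.sum_induction b (IsFlowDiv A) (fun _ _ => add) zero h

lemma edge {i j : Fin n} (h : A i j ≠ 0) : IsFlowDiv A (Pi.single i 1 - Pi.single j 1) := by
  refine ⟨fun k l => if k = i ∧ l = j then 1 else 0, fun k l => ?_, fun k l hkl => ?_, fun k => ?_⟩
  · dsimp only
    split_ifs <;> norm_num
  · obtain ⟨rfl, rfl⟩ : k = i ∧ l = j := by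
      by_contra h'
      simp [h'] at hkl
    exact h
  · simp [Pi.single_apply, ite_and]

end IsFlowDiv

lemma isFlowDiv_of_pow {n : ℕ} {A : Matrix (Fin n) (Fin n) ℝ} (k : ℕ) (i j : Fin n)
    (h : (A ^ k) i j ≠ 0) : IsFlowDiv A (Pi.single i 1 - Pi.single j 1) := by
  induction k generalizing j with
  | zero =>
    obtain rfl : i = j := by
      by_contra hij
      simp [Matrix.one_apply_ne hij] at h
    simpa using IsFlowDiv.zero
  | succ k ih =>
    rw [pow_succ, Matrix.mul_apply] at h
    obtain ⟨l, -, hl⟩ := Finset.exists_ne_zero_of_sum_ne_zero h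
    simpa using (ih l (left_ne_zero_of_mul hl)).add (IsFlowDiv.edge (right_ne_zero_of_mul hl))

/-- On a strongly connected graph every zero-sum vector is the divergence of a nonnegative flow. -/
lemma isFlowDiv_of_sum_eq_zero {n : ℕ} {A : Matrix (Fin n) (Fin n) ℝ}
    (hA : ∀ i j, IsFlowDiv A (Pi.single i 1 - Pi.single j 1)) (r : Fin n)
    (b : Fin n → ℝ) (hb : ∑ i, b i = 0) : IsFlowDiv A b := by
  have key : b = ∑ i, b i • (Pi.single i 1 - Pi.single r 1 : Fin n → ℝ) := by
    funext k
    simp [Finset.sum_apply, mul_sub, Finset.sum_sub_distrib, hb, Pi.single_apply]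
  rw [key]
  refine IsFlowDiv.sum _ _ fun i _ => ?_
  rcases le_total 0 (b i) with h | h
  · exact (hA i r).smul h
  · have := (hA r i).smul (neg_nonneg.mpr h)
    rwa [neg_smul, ← smul_neg, neg_sub] at this

theorem pagerank_feasibility {n : ℕ} (hn : 2 ≤ n)
    (A : Matrix (Fin n) (Fin n) ℝ) (α : ℝ) (v πhat : Fin n → ℝ)
    (hA : ∀ i j, 0 ≤ A i j)
    (hirr : ∀ i j, ∃ k : ℕ, 1 ≤ k ∧ 0 < (A ^ k) i j)
    (hα0 : 0 < α) (hα1 : α < 1)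
    (hv : ∀ i, 0 ≤ v i) (hv1 : ∑ i, v i = 1)
    (hπ : ∀ i, 0 < πhat i) (hπ1 : ∑ i, πhat i = 1) :
    ∃ Δ : Matrix (Fin n) (Fin n) ℝ,
      (∀ i j, Δ i j ≠ 0 → (A + 1) i j ≠ 0) ∧
      Δ.mulVec (fun _ => 1) = 0 ∧
      (∀ i j, i ≠ j → 0 ≤ (A + Δ) i j) ∧
      (α • ((Matrix.diagonal (A.mulVec (fun _ => 1)))⁻¹ * (A + Δ)) +
          (1 - α) • Matrix.vecMulVec (fun _ => 1) v)ᵀ.mulVec πhat = πhat := by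
  have hd : ∀ i, 0 < ∑ j, A i j := by
    intro i
    obtain ⟨k, hk, hpos⟩ := hirr i i
    obtain ⟨m, rfl⟩ := Nat.exists_eq_add_of_le' hk
    rw [pow_succ', Matrix.mul_apply] at hpos
    obtain ⟨l, -, hl⟩ := Finset.exists_ne_zero_of_sum_ne_zero hpos.ne'
    exact Finset.sum_pos' (fun j _ => hA i j)
      ⟨l, Finset.mem_univ l, (hA i l).lt_of_ne' (left_ne_zero_of_mul hl)⟩
  have hb : ∑ i, (πhat i - (πhat i - (1 - α) * v i) / α) = 0 := by
    rw [Finset.sum_sub_distrib, ← Finset.sum_div, Finset.sum_sub_distrib, ← Finset.mul_sum,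
      hπ1, hv1]
    field_simp
    ring
  obtain ⟨F, hF0, hFA, hF⟩ := isFlowDiv_of_sum_eq_zero
    (fun i j => (hirr i j).elim fun k hk => isFlowDiv_of_pow k i j hk.2.ne') ⟨0, by omega⟩ _ hb
  set d : Fin n → ℝ := fun i => ∑ j, A i j with hd_def
  have hd' : ∀ i, d i ≠ 0 := fun i => (hd i).ne'
  have hAd : A.mulVec (fun _ => 1) = d := by
    funext i
    simp [Matrix.mulVec, dotProduct, d]
  have hinv : (Matrix.diagonal d)⁻¹ = Matrix.diagonal (fun i => (d i)⁻¹) := by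
    apply Matrix.inv_eq_right_inv
    rw [Matrix.diagonal_mul_diagonal]
    simp [hd']
  -- Off the diagonal `A + Δ` is the flow `F` rescaled by `1 / w i = d i / πhat i`;
  -- the diagonal correction makes the rows of `Δ` sum to zero.
  let M : Matrix (Fin n) (Fin n) ℝ := fun i j => F i j * (d i / πhat i) - A i j
  refine ⟨M - Matrix.diagonal (fun i => ∑ j, M i j), fun i j h => ?_, ?_, fun i j hij => ?_, ?_⟩
  · by_cases hij : i = j
    · subst hij
      have := hA i i
      simp only [Matrix.add_apply, Matrix.one_apply_eq]
      positivity
    · intro h0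
      rw [Matrix.add_apply, Matrix.one_apply_ne hij, add_zero] at h0
      have hF' : F i j = 0 := by_contra fun h' => hFA i j h' h0
      rw [Matrix.sub_apply, Matrix.diagonal_apply_ne _ hij] at h
      simp [M, h0, hF'] at h
  · funext i
    simp [Matrix.mulVec, dotProduct, Matrix.sub_apply, Finset.sum_sub_distrib, Matrix.diagonal_apply]
  · have h1 := (hd i).le
    have h2 := (hπ i).le
    have h3 := hF0 i j
    rw [Matrix.add_apply, Matrix.sub_apply, Matrix.diagonal_apply_ne _ hij]
    simp only [M]
    have : 0 ≤ F i j * (d i / πhat i) := mul_nonneg h3 (div_nonneg h1 h2)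
    linarith
  · have hM : ∀ i, ∑ j, M i j = (∑ j, F i j) * (d i / πhat i) - d i := by
      intro i
      simp [M, Finset.sum_sub_distrib, ← Finset.sum_mul, d]
    have hterm : ∀ i j, (α * ((d i)⁻¹ * (A i j + (M i j
        - if i = j then ∑ k, M i k else 0))) + (1 - α) * v j) * πhat i
        = α * F i j - (if i = j then α * (∑ k, F i k - πhat i) else 0)
          + (1 - α) * v j * πhat i := by
      intro i j
      have h1 := hd' i
      have h2 := (hπ i).ne'
      rw [hM]
      simp only [M]
      split_ifs <;> field_simp <;> ring
    rw [hAd, hinv]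
    funext j
    have hsum : (α • (Matrix.diagonal (fun i => (d i)⁻¹)
          * (A + (M - Matrix.diagonal (fun i => ∑ j, M i j))))
          + (1 - α) • Matrix.vecMulVec (fun _ => 1) v)ᵀ.mulVec πhat j
        = ∑ i, (α * ((d i)⁻¹ * (A i j + (M i j
        - if i = j then ∑ k, M i k else 0))) + (1 - α) * v j) * πhat i := by
      simp [Matrix.mulVec, dotProduct, Matrix.diagonal_mul, Matrix.vecMulVec_apply,
        Matrix.diagonal_apply]
    rw [hsum, Finset.sum_congr rfl fun i _ => hterm i j, Finset.sum_add_distrib,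
      Finset.sum_sub_distrib, ← Finset.mul_sum, ← Finset.mul_sum, hπ1]
    simp only [Finset.sum_ite_eq', Finset.mem_univ, if_true]
    have h := hF j
    have hα : α * ((πhat j - (1 - α) * v j) / α) = πhat j - (1 - α) * v j := by field_simp
    linear_combination (-α) * h + hα
end

section
/- Let A ∈ ℝ^{n×n} be entrywise nonnegative with A𝟏 > 0 entrywise, D = diag(A𝟏), α ∈ (0,1), v ∈ ℝ^n with v ≥ 0 entrywise and v^T𝟏 = 1, and π̂ ∈ ℝ^n with π̂ > 0 entrywise and π̂^T𝟏 = 1. For σ ∈ ℝ^n set Δ = D_σ(A − D) and G̃ = αD^{-1}(A+Δ) + (1−α)𝟏v^T. Then G̃^T π̂ = π̂ holds if and only if σ satisfies the linear system (I − D^{-1}A)^T D_{π̂} σ = α^{-1}((1−α)v − (I − αD^{-1}A)^T π̂). -/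
/-!
Write `P = D⁻¹A`. Diagonal matrices commute and `D` is invertible, so `D⁻¹Δ = -D_σ(I - P)`.
Since `D_σ π̂ = D_π̂ σ` and `(𝟏vᵀ)ᵀπ̂ = (𝟏ᵀπ̂)v = v`, this gives
`G̃ᵀπ̂ = αPᵀπ̂ - α(I - P)ᵀD_π̂ σ + (1 - α)v`, which is affine in `σ`; the equivalence is then a
rearrangement of `G̃ᵀπ̂ = π̂` followed by division by `α ≠ 0`.
-/

open Matrix

theorem pagerank_sigma_linear_system {n : ℕ}
    (A : Matrix (Fin n) (Fin n) ℝ) (α : ℝ) (v πhat σ : Fin n → ℝ)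
    (hA : ∀ i j, 0 ≤ A i j) (hA1 : ∀ i, 0 < A.mulVec (fun _ => 1) i)
    (hα0 : 0 < α) (hα1 : α < 1)
    (hv : ∀ i, 0 ≤ v i) (hv1 : ∑ i, v i = 1)
    (hπ : ∀ i, 0 < πhat i) (hπ1 : ∑ i, πhat i = 1)
    (D Δ Gt : Matrix (Fin n) (Fin n) ℝ)
    (hD : D = Matrix.diagonal (A.mulVec (fun _ => 1)))
    (hΔ : Δ = Matrix.diagonal σ * (A - D))
    (hGt : Gt = α • (D⁻¹ * (A + Δ)) + (1 - α) • Matrix.vecMulVec (fun _ => 1) v) :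
    Gtᵀ.mulVec πhat = πhat ↔
      ((1 - D⁻¹ * A)ᵀ * Matrix.diagonal πhat).mulVec σ =
        α⁻¹ • ((1 - α) • v - (1 - α • (D⁻¹ * A))ᵀ.mulVec πhat) := by
  have hunit : IsUnit D.det := by
    rw [hD, det_diagonal, isUnit_iff_ne_zero]
    exact Finset.prod_ne_zero_iff.2 fun i _ => (hA1 i).ne'
  have hinv : D⁻¹ * D = 1 := nonsing_inv_mul D hunit
  have hDσ : D * diagonal σ = diagonal σ * D := by
    rw [hD, diagonal_mul_diagonal, diagonal_mul_diagonal]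
    simp only [mul_comm]
  have hcomm : D⁻¹ * diagonal σ = diagonal σ * D⁻¹ := by
    calc D⁻¹ * diagonal σ = D⁻¹ * (diagonal σ * D) * D⁻¹ := by
          rw [Matrix.mul_assoc, Matrix.mul_assoc, mul_nonsing_inv D hunit, Matrix.mul_one]
      _ = diagonal σ * D⁻¹ := by
          rw [← hDσ, ← Matrix.mul_assoc, hinv, Matrix.one_mul]
  have hΔ' : D⁻¹ * Δ = -(diagonal σ * (1 - D⁻¹ * A)) := by
    rw [hΔ, ← Matrix.mul_assoc, hcomm, Matrix.mul_assoc, Matrix.mul_sub, hinv,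
      ← Matrix.mul_neg, neg_sub]
  have hswap : diagonal σ *ᵥ πhat = diagonal πhat *ᵥ σ := by
    ext i
    simp only [mulVec_diagonal, mul_comm]
  have hrank : (vecMulVec (fun _ => (1 : ℝ)) v)ᵀ *ᵥ πhat = v := by
    ext i
    simp [mulVec, dotProduct, vecMulVec_apply, ← Finset.mul_sum, hπ1]
  have hG : Gtᵀ *ᵥ πhat = α • ((D⁻¹ * A)ᵀ *ᵥ πhat)
      - α • (((1 - D⁻¹ * A)ᵀ * diagonal πhat) *ᵥ σ) + (1 - α) • v := by
    rw [hGt, Matrix.mul_add, hΔ', transpose_add, transpose_smul, transpose_smul, transpose_add,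
      transpose_neg, transpose_mul (diagonal σ), diagonal_transpose, add_mulVec, smul_mulVec,
      smul_mulVec, hrank, add_mulVec, neg_mulVec, ← mulVec_mulVec, hswap, mulVec_mulVec,
      smul_add, smul_neg, ← sub_eq_add_neg]
  have hR : (1 - α • (D⁻¹ * A))ᵀ *ᵥ πhat = πhat - α • ((D⁻¹ * A)ᵀ *ᵥ πhat) := by
    rw [transpose_sub, transpose_one, transpose_smul, sub_mulVec, one_mulVec, smul_mulVec]
  rw [hG, hR, eq_inv_smul_iff₀ hα0.ne']
  constructor <;> intro h
  · linear_combination -h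
  · linear_combination -h
end

section
/- Let n ≥ 2, let A ∈ ℝ^{n×n} be entrywise nonnegative and irreducible, D = diag(A𝟏), α ∈ (0,1), v ∈ ℝ^n with v ≥ 0 entrywise and v^T𝟏 = 1, and π̂ ∈ ℝ^n with π̂ > 0 entrywise and π̂^T𝟏 = 1. Let w ∈ ℝ^n satisfy w > 0 entrywise, w^T(I − D^{-1}A) = 0 and w^T𝟏 = 1, and assume I − D^{-1}A + 𝟏w^T is invertible. Define σ* = α^{-1} D_{π̂}^{-1} (I − D^{-1}A + 𝟏w^T)^{-T} ((1−α)v − (I − αD^{-1}A)^T π̂). Then the set of solutions σ ∈ ℝ^n of the linear system (I − D^{-1}A)^T D_{π̂} σ = α^{-1}((1−α)v − (I − αD^{-1}A)^T π̂) is exactly { σ* + γ D_{π̂}^{-1} w : γ ∈ ℝ }. -/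
/-!
Write `M = 1 - D⁻¹ * A` and `N = M + 𝟏 wᵀ`. Since `D⁻¹ * A` is row-stochastic, `M 𝟏 = 0`, and
`Mᵀ w = 0` by assumption. As `wᵀ 𝟏 = 1`, this gives `Nᵀ w = w` and `𝟏ᵀ Nᵀ = 𝟏ᵀ`. Because
`Nᵀ y = Mᵀ y + (𝟏ᵀ y) w`, for a right-hand side `c` with `𝟏ᵀ c = 0` the solutions of `Mᵀ y = c`
are exactly the vectors `N⁻ᵀ c + γ w` (`transpose_mulVec_eq_iff`). The right-hand side here has zero
sum because `v` and `πhat` are both normalised and `D⁻¹ * A` fixes `𝟏`. The change of variables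
`y = diag(πhat) σ` concludes. Irreducibility serves to make the row sums of `A` positive, so that
`D` is invertible and `D⁻¹ * A` is indeed row-stochastic.
-/

open Matrix

/-- An irreducible nonnegative matrix has no zero row, since a zero row of `A` would be a zero row
of every power `A ^ k` with `1 ≤ k`. -/
lemma rowSum_pos_of_irreducible {n : ℕ} (A : Matrix (Fin n) (Fin n) ℝ)
    (hA : ∀ i j, 0 ≤ A i j)
    (hirr : ∀ i j, ∃ k : ℕ, 1 ≤ k ∧ 0 < (A ^ k) i j) (i : Fin n) :
    0 < A.mulVec (fun _ => 1) i := by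
  have hsum : A.mulVec (fun _ => 1) i = ∑ j, A i j := by simp [Matrix.mulVec, dotProduct]
  rw [hsum]
  refine (Finset.sum_nonneg fun j _ => hA i j).lt_of_ne' fun h0 => ?_
  have hz : ∀ j, A i j = 0 := fun j =>
    (Finset.sum_eq_zero_iff_of_nonneg fun j _ => hA i j).1 h0 j (Finset.mem_univ j)
  obtain ⟨k, hk, hpos⟩ := hirr i i
  obtain ⟨m, rfl⟩ := Nat.exists_eq_add_of_le' hk
  rw [pow_succ', Matrix.mul_apply] at hpos
  simp [hz] at hpos

lemma inv_diagonal_rowSum_mul_mulVec_one {n : ℕ} (A : Matrix (Fin n) (Fin n) ℝ)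
    (hpos : ∀ i, 0 < A.mulVec (fun _ => 1) i) :
    ((Matrix.diagonal (A.mulVec (fun _ => 1)))⁻¹ * A).mulVec (fun _ => 1) = fun _ => 1 := by
  have hdet : IsUnit (Matrix.diagonal (A.mulVec (fun _ => 1))).det := by
    rw [Matrix.det_diagonal, isUnit_iff_ne_zero]
    exact Finset.prod_ne_zero_iff.2 fun i _ => (hpos i).ne'
  have h : (Matrix.diagonal (A.mulVec (fun _ => 1))).mulVec (fun _ => 1) =
      A.mulVec (fun _ => 1) := by
    ext i
    rw [Matrix.mulVec_diagonal, mul_one]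
  rw [← Matrix.mulVec_mulVec]
  generalize Matrix.diagonal (A.mulVec (fun _ => 1)) = D at hdet h ⊢
  rw [← h, Matrix.mulVec_mulVec, Matrix.nonsing_inv_mul _ hdet, Matrix.one_mulVec]

/-- If `M 𝟏 = 0`, `wᵀ M = 0`, `wᵀ 𝟏 = 1` and the rank-one correction `M + 𝟏 wᵀ` is invertible, then
for a zero-sum right-hand side `c` the solutions of the singular system `Mᵀ y = c` form the line
through `(M + 𝟏 wᵀ)⁻ᵀ c` in direction `w`. -/
lemma transpose_mulVec_eq_iff {n : ℕ} (M : Matrix (Fin n) (Fin n) ℝ) (w c y : Fin n → ℝ)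
    (hM : M.mulVec (fun _ => 1) = 0) (hwM : Matrix.vecMul w M = 0) (hw1 : ∑ i, w i = 1)
    (hc : ∑ i, c i = 0)
    (hinv : IsUnit (M + Matrix.vecMulVec (fun _ => 1) w).det) :
    Mᵀ.mulVec y = c ↔
      ∃ γ : ℝ, y = ((M + Matrix.vecMulVec (fun _ => 1) w)ᵀ)⁻¹.mulVec c + γ • w := by
  set N := M + Matrix.vecMulVec (fun _ => 1) w with hN
  have hinvT : IsUnit Nᵀ.det := by rwa [Matrix.det_transpose]
  have hNy : ∀ z, Nᵀ.mulVec z = Mᵀ.mulVec z + (∑ i, z i) • w := by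
    intro z
    rw [hN, Matrix.transpose_add, Matrix.add_mulVec]
    congr 1
    ext i
    simp [Matrix.mulVec, dotProduct, Matrix.vecMulVec_apply, Finset.mul_sum, mul_comm]
  have hMw : Mᵀ.mulVec w = 0 := by rw [Matrix.mulVec_transpose, hwM]
  have hNw : Nᵀ.mulVec w = w := by rw [hNy, hMw, hw1, zero_add, one_smul]
  have hsumM : ∀ z, ∑ i, Mᵀ.mulVec z i = 0 := by
    intro z
    have h : (fun _ => (1 : ℝ)) ⬝ᵥ Mᵀ.mulVec z = 0 := by
      rw [Matrix.dotProduct_mulVec, Matrix.vecMul_transpose, hM, zero_dotProduct]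
    simpa [dotProduct] using h
  have hcancel : ∀ z, Nᵀ⁻¹.mulVec (Nᵀ.mulVec z) = z := fun z => by
    rw [Matrix.mulVec_mulVec, Matrix.nonsing_inv_mul _ hinvT, Matrix.one_mulVec]
  have hcancel' : Nᵀ.mulVec (Nᵀ⁻¹.mulVec c) = c := by
    rw [Matrix.mulVec_mulVec, Matrix.mul_nonsing_inv _ hinvT, Matrix.one_mulVec]
  constructor
  · intro hy
    refine ⟨∑ i, y i, ?_⟩
    have hNinvw : Nᵀ⁻¹.mulVec w = w := by
      conv_lhs => rw [← hNw]
      exact hcancel w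
    calc y = Nᵀ⁻¹.mulVec (Nᵀ.mulVec y) := (hcancel y).symm
      _ = _ := by rw [hNy, hy, Matrix.mulVec_add, Matrix.mulVec_smul, hNinvw]
  · rintro ⟨γ, rfl⟩
    -- `Nᵀ` preserves coordinate sums, so `N⁻ᵀ c` inherits the zero sum of `c`
    have hsum : ∑ i, Nᵀ⁻¹.mulVec c i = 0 := by
      have h := congrArg (fun u : Fin n → ℝ => ∑ i, u i) (hNy (Nᵀ⁻¹.mulVec c))
      simp only [hcancel', hc, Pi.add_apply, Pi.smul_apply, smul_eq_mul, Finset.sum_add_distrib,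
        hsumM, ← Finset.mul_sum, hw1] at h
      linarith
    have h := hNy (Nᵀ⁻¹.mulVec c)
    rw [hcancel', hsum, zero_smul, add_zero] at h
    rw [Matrix.mulVec_add, Matrix.mulVec_smul, hMw, smul_zero, add_zero, ← h]

theorem pagerank_sigma_solution_set {n : ℕ} (hn : 2 ≤ n)
    (A : Matrix (Fin n) (Fin n) ℝ) (α : ℝ) (v πhat w : Fin n → ℝ)
    (hA : ∀ i j, 0 ≤ A i j)
    (hirr : ∀ i j, ∃ k : ℕ, 1 ≤ k ∧ 0 < (A ^ k) i j)
    (hα0 : 0 < α) (hα1 : α < 1)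
    (hv : ∀ i, 0 ≤ v i) (hv1 : ∑ i, v i = 1)
    (hπ : ∀ i, 0 < πhat i) (hπ1 : ∑ i, πhat i = 1)
    (D : Matrix (Fin n) (Fin n) ℝ)
    (hD : D = Matrix.diagonal (A.mulVec (fun _ => 1)))
    (hw : ∀ i, 0 < w i)
    (hwM : Matrix.vecMul w (1 - D⁻¹ * A) = 0) (hw1 : ∑ i, w i = 1)
    (hinv : IsUnit (1 - D⁻¹ * A + Matrix.vecMulVec (fun _ => 1) w).det)
    (σstar : Fin n → ℝ)
    (hσstar : σstar = α⁻¹ •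
      (Matrix.diagonal πhat)⁻¹.mulVec
        (((1 - D⁻¹ * A + Matrix.vecMulVec (fun _ => 1) w)ᵀ)⁻¹.mulVec
          ((1 - α) • v - (1 - α • (D⁻¹ * A))ᵀ.mulVec πhat))) :
    {σ : Fin n → ℝ |
        ((1 - D⁻¹ * A)ᵀ * Matrix.diagonal πhat).mulVec σ =
          α⁻¹ • ((1 - α) • v - (1 - α • (D⁻¹ * A))ᵀ.mulVec πhat)} =
      {σ : Fin n → ℝ | ∃ γ : ℝ, σ = σstar + γ • (Matrix.diagonal πhat)⁻¹.mulVec w} := by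
  have hP : (D⁻¹ * A).mulVec (fun _ => 1) = fun _ => 1 := by
    rw [hD]
    exact inv_diagonal_rowSum_mul_mulVec_one A (rowSum_pos_of_irreducible A hA hirr)
  have hM : (1 - D⁻¹ * A).mulVec (fun _ => 1) = 0 := by
    rw [Matrix.sub_mulVec, Matrix.one_mulVec, hP, sub_self]
  set b := (1 - α) • v - (1 - α • (D⁻¹ * A))ᵀ.mulVec πhat with hb
  have hbsum : ∑ i, b i = 0 := by
    have h : (fun _ => (1 : ℝ)) ⬝ᵥ (1 - α • (D⁻¹ * A))ᵀ.mulVec πhat = 1 - α := by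
      rw [Matrix.dotProduct_mulVec, Matrix.vecMul_transpose, Matrix.sub_mulVec,
        Matrix.one_mulVec, Matrix.smul_mulVec, hP]
      simp [dotProduct, ← Finset.mul_sum, hπ1]
    simp only [dotProduct, one_mul] at h
    simp only [hb, Pi.sub_apply, Pi.smul_apply, smul_eq_mul, Finset.sum_sub_distrib,
      ← Finset.mul_sum, hv1, h]
    ring
  have hcsum : ∑ i, (α⁻¹ • b) i = 0 := by
    simp only [Pi.smul_apply, smul_eq_mul, ← Finset.mul_sum, hbsum, mul_zero]
  have hdet : IsUnit (Matrix.diagonal πhat).det := by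
    rw [Matrix.det_diagonal, isUnit_iff_ne_zero]
    exact Finset.prod_ne_zero_iff.2 fun i _ => (hπ i).ne'
  have hdiag : ∀ σ y : Fin n → ℝ,
      (Matrix.diagonal πhat).mulVec σ = y ↔ σ = (Matrix.diagonal πhat)⁻¹.mulVec y := by
    intro σ y
    constructor
    · rintro rfl
      rw [Matrix.mulVec_mulVec, Matrix.nonsing_inv_mul _ hdet, Matrix.one_mulVec]
    · rintro rfl
      rw [Matrix.mulVec_mulVec, Matrix.mul_nonsing_inv _ hdet, Matrix.one_mulVec]
  ext σ
  simp only [Set.mem_ofPred_eq]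
  rw [← Matrix.mulVec_mulVec,
    transpose_mulVec_eq_iff (1 - D⁻¹ * A) w (α⁻¹ • b) _ hM hwM hw1 hcsum hinv]
  refine exists_congr fun γ => ?_
  rw [hdiag, hσstar, Matrix.mulVec_add, Matrix.mulVec_smul, Matrix.mulVec_smul, Matrix.mulVec_smul]
end

section
/- Let A ∈ ℝ^{n×n} be entrywise nonnegative with A𝟏 > 0 entrywise, D = diag(A𝟏), α ∈ (0,1), v ∈ ℝ^n with v ≥ 0 entrywise and v^T𝟏 = 1, and let Δ ∈ ℝ^{n×n} satisfy Δ𝟏 = 0 and have all off-diagonal entries of A + Δ nonnegative. Set G̃ = αD^{-1}(A+Δ) + (1−α)𝟏v^T and suppose π̂ ∈ ℝ^n satisfies G̃^T π̂ = π̂. Let θ = min_i [D^{-1}(A+Δ)]_{ii} and suppose θ < 0, and set r̂ = 1 − αθ. Then for every r ≥ r̂, defining α̂ = 1 − (1−α)/r and P̂ = (α D^{-1}(A+Δ) + (r−1)I)/(r−1+α), the matrix P̂ is row-stochastic (entrywise nonnegative with P̂𝟏 = 𝟏), and the matrix Ĝ = α̂ P̂ + (1−α̂)𝟏v^T satisfies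 Ĝ^T π̂ = π̂. -/
/-!
Write `B = D⁻¹ (A + Δ)`. Since `α̂ = (r - 1 + α) / r`, the scaling in `P̂` cancels and
`Ĝ = r⁻¹ G̃ + (1 - r⁻¹) I`, a relaxation of `G̃`, so every fixed vector of `G̃ᵀ` is one of `Ĝᵀ`.
Row sums of `P̂` are `(α + r - 1) / (r - 1 + α) = 1` because `B 𝟏 = D⁻¹ A 𝟏 = 𝟏`. Off the diagonal
`P̂` is nonnegative because `A + Δ` is; on it, `α Bᵢᵢ + r - 1 ≥ α θ + r - 1 ≥ 0`.
-/

open Matrix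

theorem pagerank_shift_and_scale {n : ℕ}
    (A Δ : Matrix (Fin n) (Fin n) ℝ) (α : ℝ) (v πhat : Fin n → ℝ)
    (hA : ∀ i j, 0 ≤ A i j) (hA1 : ∀ i, 0 < A.mulVec (fun _ => 1) i)
    (hα0 : 0 < α) (hα1 : α < 1)
    (hv : ∀ i, 0 ≤ v i) (hv1 : ∑ i, v i = 1)
    (hΔ1 : Δ.mulVec (fun _ => 1) = 0)
    (hoff : ∀ i j, i ≠ j → 0 ≤ (A + Δ) i j)
    (D Gt : Matrix (Fin n) (Fin n) ℝ)
    (hD : D = Matrix.diagonal (A.mulVec (fun _ => 1)))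
    (hGt : Gt = α • (D⁻¹ * (A + Δ)) + (1 - α) • Matrix.vecMulVec (fun _ => 1) v)
    (hπ : Gtᵀ.mulVec πhat = πhat)
    (θ : ℝ) (hθ : θ = ⨅ i, (D⁻¹ * (A + Δ)) i i) (hθ0 : θ < 0)
    (rhat : ℝ) (hrhat : rhat = 1 - α * θ) :
    ∀ r : ℝ, rhat ≤ r →
      ∀ αhat : ℝ, αhat = 1 - (1 - α) / r →
      ∀ Phat : Matrix (Fin n) (Fin n) ℝ,
        Phat = (r - 1 + α)⁻¹ • (α • (D⁻¹ * (A + Δ)) + (r - 1) • 1) →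
      (∀ i j, 0 ≤ Phat i j) ∧
        Phat.mulVec (fun _ => 1) = (fun _ => 1) ∧
        (αhat • Phat + (1 - αhat) • Matrix.vecMulVec (fun _ => 1) v)ᵀ.mulVec πhat
          = πhat := by
  intro r hr αhat hαhat Phat hPhat
  have hr1 : 1 < r := by nlinarith [mul_pos hα0 (neg_pos.2 hθ0)]
  have hpos : 0 < r - 1 + α := by linarith
  set d := A.mulVec (fun _ => (1 : ℝ)) with hd
  have hDinv : D⁻¹ = Matrix.diagonal (fun i => (d i)⁻¹) := by
    apply Matrix.inv_eq_right_inv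
    rw [hD, Matrix.diagonal_mul_diagonal, ← Matrix.diagonal_one]
    congr 1
    funext i
    exact mul_inv_cancel₀ (hA1 i).ne'
  have hB1 : (D⁻¹ * (A + Δ)).mulVec (fun _ => (1 : ℝ)) = fun _ => 1 := by
    rw [← Matrix.mulVec_mulVec, Matrix.add_mulVec, hΔ1, add_zero, ← hd, hDinv]
    funext i
    rw [Matrix.mulVec_diagonal]
    exact inv_mul_cancel₀ (hA1 i).ne'
  have hBoff : ∀ i j, i ≠ j → 0 ≤ (D⁻¹ * (A + Δ)) i j := by
    intro i j hij
    rw [hDinv, Matrix.diagonal_mul]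
    exact mul_nonneg (inv_nonneg.2 (hA1 i).le) (hoff i j hij)
  have hBdiag : ∀ i, θ ≤ (D⁻¹ * (A + Δ)) i i := by
    intro i
    rw [hθ]
    exact ciInf_le (Set.finite_range _).bddBelow i
  generalize D⁻¹ * (A + Δ) = B at *
  refine ⟨fun i j => ?_, ?_, ?_⟩
  · rw [hPhat, Matrix.smul_apply, smul_eq_mul]
    refine mul_nonneg (inv_nonneg.2 hpos.le) ?_
    simp only [Matrix.add_apply, Matrix.smul_apply, smul_eq_mul]
    by_cases hij : i = j
    · subst hij
      rw [Matrix.one_apply_eq]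
      nlinarith [mul_le_mul_of_nonneg_left (hBdiag i) hα0.le]
    · rw [Matrix.one_apply_ne hij]
      nlinarith [mul_nonneg hα0.le (hBoff i j hij)]
  · rw [hPhat, Matrix.smul_mulVec, Matrix.add_mulVec, Matrix.smul_mulVec, Matrix.smul_mulVec,
      hB1, Matrix.one_mulVec]
    funext i
    simp only [Pi.smul_apply, Pi.add_apply, smul_eq_mul]
    field_simp
    ring
  · have hG : αhat • Phat + (1 - αhat) • Matrix.vecMulVec (fun _ => 1) v
        = r⁻¹ • Gt + (1 - r⁻¹) • (1 : Matrix (Fin n) (Fin n) ℝ) := by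
      have hscale : αhat * (r - 1 + α)⁻¹ = r⁻¹ := by
        rw [hαhat]
        field_simp
        ring
      rw [hPhat, smul_smul, hscale, hGt, hαhat]
      ext i j
      simp only [Matrix.add_apply, Matrix.smul_apply, smul_eq_mul]
      field_simp
      ring
    rw [hG, Matrix.transpose_add, Matrix.transpose_smul, Matrix.transpose_smul,
      Matrix.transpose_one, Matrix.add_mulVec, Matrix.smul_mulVec, Matrix.smul_mulVec, hπ,
      Matrix.one_mulVec, ← add_smul, add_sub_cancel, one_smul]
end

section
/- Let A ∈ ℝ^{n×n} be entrywise nonnegative with A𝟏 > 0 entrywise, D = diag(A𝟏) with diagonal entries d_i = (A𝟏)_i, α ∈ (0,1), v ∈ ℝ^n with v ≥ 0 entrywise and v^T𝟏 = 1, and Δ ∈ ℝ^{n×n}. Suppose π, π̂ ∈ ℝ^n satisfy π^T𝟏 = π̂^T𝟏 = 1, π̂ > 0 entrywise, (α(D^{-1}A)^T + (1−α)v𝟏^T)π = π, and (α(D^{-1}(A+Δ))^T + (1−α)v𝟏^T)π̂ = π̂. Then Σ_{i,j} |Δ_{ij}| ≥ α^{-1} · ‖π̂ − π‖₁ / (‖(I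 − αD^{-1}A)^{-1}‖_∞ · max_i(π̂_i/d_i)) ≥ ((1−α)/α) · ‖π̂ − π‖_∞ / max_i(π̂_i/d_i). -/
/-!
Write `P = D⁻¹A`, `N = (I - αP)⁻¹`, `d = A𝟏` and `x = πhat - π`. Subtracting the two PageRank
equations cancels the teleportation terms, since both vectors have total mass one, and leaves
`(I - αP)ᵀ x = α w` with `w = (D⁻¹Δ)ᵀ πhat`, so `x = α Nᵀ w`. The 1-norm of `Nᵀ w` is at most
`‖N‖_∞ ‖w‖₁` (`sum_abs_vecMul_le`), and `w_j = ∑ i, (πhat_i / d_i) Δ_ij` gives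
`‖w‖₁ ≤ max_i (πhat_i / d_i) * ∑ |Δ_ij|`; this is the first inequality. The second one follows
from `‖x‖_∞ ≤ ‖x‖₁` and `‖N‖_∞ ≤ 1 / (1 - α)` (`one_sub_mul_matNormInf_inv_le`), a consequence of
`N = I + αPN` and the stochasticity of `P`.
-/


open Matrix

/-- The matrix norm induced by the vector ∞-norm: the maximum absolute row sum. -/
noncomputable def matNormInf {n : ℕ} (M : Matrix (Fin n) (Fin n) ℝ) : ℝ :=
  ⨆ i, ∑ j, |M i j|

lemma sum_abs_le_matNormInf {n : ℕ} (M : Matrix (Fin n) (Fin n) ℝ) (i : Fin n) :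
    ∑ j, |M i j| ≤ matNormInf M :=
  le_ciSup (f := fun i => ∑ j, |M i j|) (Set.finite_range _).bddAbove i

/-- The 1-norm of row vectors is compatible with the maximum absolute row sum. -/
lemma sum_abs_vecMul_le {n : ℕ} (M : Matrix (Fin n) (Fin n) ℝ) (w : Fin n → ℝ) :
    ∑ j, |(w ᵥ* M) j| ≤ matNormInf M * ∑ i, |w i| := by
  calc ∑ j, |(w ᵥ* M) j| ≤ ∑ j, ∑ i, |w i| * |M i j| := by
        refine Finset.sum_le_sum fun j _ => ?_
        simp only [Matrix.vecMul, dotProduct, ← abs_mul]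
        exact Finset.abs_sum_le_sum_abs _ _
    _ = ∑ i, |w i| * ∑ j, |M i j| := by
        rw [Finset.sum_comm]
        simp only [Finset.mul_sum]
    _ ≤ ∑ i, |w i| * matNormInf M := by
        gcongr with i
        exact sum_abs_le_matNormInf M i
    _ = _ := by rw [← Finset.sum_mul, mul_comm]

/-- `I - αP` is strictly diagonally dominant when `P` is row-stochastic. -/
lemma isUnit_det_one_sub_smul {n : ℕ} (P : Matrix (Fin n) (Fin n) ℝ) {α : ℝ}
    (hα0 : 0 < α) (hα1 : α < 1) (hP : ∀ i j, 0 ≤ P i j) (hP1 : ∀ i, ∑ j, P i j = 1) :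
    IsUnit (1 - α • P).det := by
  refine isUnit_iff_ne_zero.mpr (det_ne_zero_of_sum_row_lt_diag fun k => ?_)
  have hoff : ∑ j ∈ Finset.univ.erase k, ‖(1 - α • P) k j‖
      = ∑ j ∈ Finset.univ.erase k, α * P k j := by
    refine Finset.sum_congr rfl fun j hj => ?_
    have hjk : k ≠ j := (Finset.ne_of_mem_erase hj).symm
    simp [Matrix.one_apply_ne hjk, abs_of_pos hα0, abs_of_nonneg (hP k j)]
  have hsplit := Finset.add_sum_erase Finset.univ (P k) (Finset.mem_univ k)
  rw [hP1 k] at hsplit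
  rw [hoff, ← Finset.mul_sum]
  refine lt_of_lt_of_le ?_ (le_abs_self _)
  simp only [Matrix.sub_apply, Matrix.one_apply_eq, Matrix.smul_apply, smul_eq_mul]
  nlinarith

/-- The bound `‖(I - αP)⁻¹‖_∞ ≤ 1 / (1 - α)` for row-stochastic `P`, in division-free form. -/
lemma one_sub_mul_matNormInf_inv_le {n : ℕ} [Nonempty (Fin n)] (P : Matrix (Fin n) (Fin n) ℝ)
    {α : ℝ} (hα0 : 0 < α) (hα1 : α < 1) (hP : ∀ i j, 0 ≤ P i j) (hP1 : ∀ i, ∑ j, P i j = 1) :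
    (1 - α) * matNormInf (1 - α • P)⁻¹ ≤ 1 := by
  have hMN := Matrix.mul_nonsing_inv _ (isUnit_det_one_sub_smul P hα0 hα1 hP hP1)
  set N := (1 - α • P)⁻¹
  have hN : N = 1 + α • (P * N) := by
    rw [sub_mul, one_mul, Matrix.smul_mul, sub_eq_iff_eq_add] at hMN
    exact hMN
  suffices h : matNormInf N ≤ 1 + α * matNormInf N by linarith
  refine ciSup_le fun i => ?_
  calc ∑ j, |N i j|
      ≤ ∑ j, (|(1 : Matrix (Fin n) (Fin n) ℝ) i j| + α * |(P i ᵥ* N) j|) := by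
        refine Finset.sum_le_sum fun j _ => ?_
        conv_lhs => rw [hN]
        refine (abs_add_le _ _).trans_eq ?_
        rw [Matrix.smul_apply, smul_eq_mul, abs_mul, abs_of_pos hα0]
        rfl
    _ = 1 + α * ∑ j, |(P i ᵥ* N) j| := by
        rw [Finset.sum_add_distrib, ← Finset.mul_sum]
        simp [Matrix.one_apply, apply_ite abs]
    _ ≤ 1 + α * (matNormInf N * ∑ k, |P i k|) := by
        gcongr
        exact sum_abs_vecMul_le N (P i)
    _ = 1 + α * matNormInf N := by
        simp only [abs_of_nonneg (hP i _), hP1, mul_one]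

theorem pagerank_perturbation_lower_bound {n : ℕ}
    (A Δ : Matrix (Fin n) (Fin n) ℝ) (α : ℝ) (v π πhat : Fin n → ℝ)
    (hA : ∀ i j, 0 ≤ A i j) (hA1 : ∀ i, 0 < A.mulVec (fun _ => 1) i)
    (hα0 : 0 < α) (hα1 : α < 1)
    (hv : ∀ i, 0 ≤ v i) (hv1 : ∑ i, v i = 1)
    (D : Matrix (Fin n) (Fin n) ℝ)
    (hD : D = Matrix.diagonal (A.mulVec (fun _ => 1)))
    (hπ1 : ∑ i, π i = 1) (hπhat1 : ∑ i, πhat i = 1)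
    (hπhatpos : ∀ i, 0 < πhat i)
    (hπ : (α • (D⁻¹ * A)ᵀ + (1 - α) • Matrix.vecMulVec v (fun _ => 1)).mulVec π = π)
    (hπhat : (α • (D⁻¹ * (A + Δ))ᵀ +
      (1 - α) • Matrix.vecMulVec v (fun _ => 1)).mulVec πhat = πhat) :
    (∑ i, ∑ j, |Δ i j|) ≥
        α⁻¹ * ((∑ i, |πhat i - π i|) /
          (matNormInf ((1 - α • (D⁻¹ * A))⁻¹) *
            (⨆ i, πhat i / A.mulVec (fun _ => 1) i))) ∧
      α⁻¹ * ((∑ i, |πhat i - π i|) /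
          (matNormInf ((1 - α • (D⁻¹ * A))⁻¹) *
            (⨆ i, πhat i / A.mulVec (fun _ => 1) i))) ≥
        ((1 - α) / α) * ((⨆ i, |πhat i - π i|) /
          (⨆ i, πhat i / A.mulVec (fun _ => 1) i)) := by
  -- The suprema are over `Fin n`, which is nonempty because `v` has total mass one.
  have hne : Nonempty (Fin n) := by
    by_contra h
    rw [not_nonempty_iff] at h
    simp at hv1
  set d : Fin n → ℝ := A.mulVec (fun _ => 1) with hd
  have hDinv : D⁻¹ = Matrix.diagonal (fun i => (d i)⁻¹) := by
    refine Matrix.inv_eq_left_inv ?_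
    rw [hD, Matrix.diagonal_mul_diagonal, ← Matrix.diagonal_one]
    congr 1
    ext i
    exact inv_mul_cancel₀ (hA1 i).ne'
  set P := D⁻¹ * A with hPdef
  have hPapp : ∀ i j, P i j = (d i)⁻¹ * A i j := fun i j => by
    rw [hPdef, hDinv, Matrix.diagonal_mul]
  have hP : ∀ i j, 0 ≤ P i j := fun i j => by
    rw [hPapp]
    exact mul_nonneg (inv_nonneg.mpr (hA1 i).le) (hA i j)
  have hP1 : ∀ i, ∑ j, P i j = 1 := fun i => by
    simp only [hPapp, ← Finset.mul_sum]
    have : ∑ j, A i j = d i := by simp [hd, Matrix.mulVec, dotProduct]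
    rw [this]
    exact inv_mul_cancel₀ (hA1 i).ne'
  have hunit := isUnit_det_one_sub_smul P hα0 hα1 hP hP1
  have hMN := Matrix.mul_nonsing_inv _ hunit
  have hNle := one_sub_mul_matNormInf_inv_le P hα0 hα1 hP hP1
  set N := (1 - α • P)⁻¹ with hNdef
  set m := ⨆ i, πhat i / d i with hm
  have hmle : ∀ i, πhat i / d i ≤ m := fun i =>
    le_ciSup (f := fun i => πhat i / d i) (Set.finite_range _).bddAbove i
  have hmpos : 0 < m := by
    obtain ⟨i⟩ := hne
    exact (div_pos (hπhatpos i) (hA1 i)).trans_le (hmle i)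
  -- Positivity of the norm keeps the division by it from taking the junk value `x / 0 = 0`.
  have hNpos : 0 < matNormInf N := by
    by_contra hcon
    have hN0 : N = 0 := by
      ext i j
      have h1 : |N i j| ≤ ∑ j, |N i j| :=
        Finset.single_le_sum (f := fun j => |N i j|) (fun _ _ => abs_nonneg _) (Finset.mem_univ j)
      have h2 := sum_abs_le_matNormInf N i
      exact abs_nonpos_iff.mp (by linarith)
    rw [hN0, mul_zero] at hMN
    exact zero_ne_one hMN
  set w : Fin n → ℝ := fun j => ∑ i, πhat i / d i * Δ i j with hw
  -- Difference of the two PageRank equations, with vectors acting on the left.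
  have hstat : (πhat - π) ᵥ* (1 - α • P) = α • w := by
    have hΔ : πhat ᵥ* (D⁻¹ * Δ) = w := by
      ext j
      simp only [hDinv, Matrix.vecMul, dotProduct, Matrix.diagonal_mul, hw]
      exact Finset.sum_congr rfl fun i _ => by ring
    have htele : ∀ y : Fin n → ℝ, ∑ i, y i = 1 →
        Matrix.vecMulVec v (fun _ => (1 : ℝ)) *ᵥ y = v := fun y hy => by
      ext i
      simp [Matrix.vecMulVec, Matrix.mulVec, dotProduct, ← Finset.mul_sum, hy]
    rw [Matrix.add_mulVec, Matrix.smul_mulVec, Matrix.smul_mulVec, htele _ hπ1,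
      Matrix.mulVec_transpose] at hπ
    rw [Matrix.add_mulVec, Matrix.smul_mulVec, Matrix.smul_mulVec, htele _ hπhat1,
      Matrix.mulVec_transpose, mul_add, Matrix.vecMul_add, hΔ] at hπhat
    rw [Matrix.vecMul_sub, Matrix.vecMul_one, Matrix.vecMul_smul, Matrix.sub_vecMul]
    ext j
    have h1 := congrFun hπ j
    have h2 := congrFun hπhat j
    simp only [Pi.add_apply, Pi.sub_apply, Pi.smul_apply, smul_eq_mul, ← hPdef] at h1 h2 ⊢
    linarith
  have hx : πhat - π = (α • w) ᵥ* N := by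
    rw [← hstat, Matrix.vecMul_vecMul, hMN, Matrix.vecMul_one]
  have hwle : ∑ j, |w j| ≤ m * ∑ i, ∑ j, |Δ i j| := by
    rw [Finset.sum_comm, Finset.mul_sum]
    refine Finset.sum_le_sum fun j _ => (Finset.abs_sum_le_sum_abs _ _).trans ?_
    rw [Finset.mul_sum]
    refine Finset.sum_le_sum fun i _ => ?_
    rw [abs_mul, abs_of_pos (div_pos (hπhatpos i) (hA1 i))]
    exact mul_le_mul_of_nonneg_right (hmle i) (abs_nonneg _)
  have hx1 : ∑ i, |πhat i - π i| ≤ matNormInf N * (α * (m * ∑ i, ∑ j, |Δ i j|)) := by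
    have h := sum_abs_vecMul_le N (α • w)
    rw [← hx] at h
    simp only [Pi.sub_apply, Pi.smul_apply, smul_eq_mul, abs_mul, abs_of_pos hα0,
      ← Finset.mul_sum] at h
    refine h.trans ?_
    gcongr
  have hsup : (⨆ i, |πhat i - π i|) ≤ ∑ i, |πhat i - π i| :=
    ciSup_le fun i => Finset.single_le_sum (f := fun i => |πhat i - π i|)
      (fun _ _ => abs_nonneg _) (Finset.mem_univ i)
  have hsum0 : 0 ≤ ∑ i, |πhat i - π i| := Finset.sum_nonneg fun _ _ => abs_nonneg _
  refine ⟨?_, ?_⟩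
  · rw [ge_iff_le, inv_mul_le_iff₀ hα0, div_le_iff₀ (mul_pos hNpos hmpos)]
    linarith
  · rw [ge_iff_le, div_eq_inv_mul, mul_assoc]
    refine mul_le_mul_of_nonneg_left ?_ (inv_nonneg.mpr hα0.le)
    rw [← mul_div_assoc, div_le_div_iff₀ hmpos (mul_pos hNpos hmpos)]
    have h1 : (1 - α) * matNormInf N * (⨆ i, |πhat i - π i|) ≤ ∑ i, |πhat i - π i| :=
      calc _ ≤ (1 - α) * matNormInf N * ∑ i, |πhat i - π i| :=
            mul_le_mul_of_nonneg_left hsup (mul_nonneg (by linarith) hNpos.le)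
        _ ≤ 1 * ∑ i, |πhat i - π i| := mul_le_mul_of_nonneg_right hNle hsum0
        _ = _ := one_mul _
    have h2 := mul_le_mul_of_nonneg_right h1 hmpos.le
    linarith
end
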